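/- The set of small roots of a Coxeter system of finite rank is finite. -/

import Mathlib

open scoped Classical

/-- A geometric representation (with based root system) of a Coxeter system `cs`
on a real vector space `V`, preserving a symmetric bilinear form `form`, with
simple roots `root i` satisfying the standard inner products
`B(α_i, α_j) = -cos (π / m i j)` (with value `≤ -1` when `m i j = ∞`, encoded `0`). -/
structure GeomRep {B : Type*} {W : Type*} [Group W] (M : CoxeterMatrix B)
    (cs : CoxeterSystem M W) (V : Type*) [AddCommGroup V] [Module ℝ V] where
  form : LinearMap.BilinForm ℝ V
  form_symm : ∀ u v : V, form u v = form v u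
  ρ : W →* (V ≃ₗ[ℝ] V)
  ρ_faithful : Function.Injective ρ
  root : B → V
  root_indep : LinearIndependent ℝ root
  form_preserved : ∀ (w : W) (u v : V), form (ρ w u) (ρ w v) = form u v
  form_root_finite : ∀ i j : B, M i j ≠ 0 →
    form (root i) (root j) = - Real.cos (Real.pi / (M i j : ℝ))
  form_root_infinite : ∀ i j : B, M i j = 0 → form (root i) (root j) ≤ -1
  simple_act : ∀ (i : B) (v : V),
    ρ (cs.simple i) v = v - (2 * form (root i) v) • root i

namespace GeomRep

variable {B : Type*} {W : Type*} [Group W] {M : CoxeterMatrix B}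
  {cs : CoxeterSystem M W} {V : Type*} [AddCommGroup V] [Module ℝ V]
  (G : GeomRep M cs V)

/-- The root system `Φ = W · Δ`. -/
def Roots : Set V := {v | ∃ (w : W) (i : B), v = G.ρ w (G.root i)}

/-- `v` is a nonnegative linear combination of simple roots. -/
def IsNonnegComb (v : V) : Prop :=
  ∃ c : B →₀ ℝ, (∀ i, 0 ≤ c i) ∧ v = c.sum fun i a => a • G.root i

/-- The set of positive roots `Φ⁺`. -/
def PosRoots : Set V := {v ∈ G.Roots | G.IsNonnegComb v}

/-- The set of negative roots `Φ⁻ = -Φ⁺`. -/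
def NegRoots : Set V := {v ∈ G.Roots | G.IsNonnegComb (-v)}

/-- The reflection in a root `α`, as a linear endomorphism of `V`. -/
def refl (α : V) : Module.End ℝ V :=
  LinearMap.id - (2 : ℝ) • LinearMap.smulRight (G.form α) α

/-- The (left) inversion set `N(w) = Φ⁺ ∩ w(Φ⁻)`. -/
def invSet (w : W) : Set V := {β ∈ G.PosRoots | G.ρ w⁻¹ β ∈ G.NegRoots}

/-- `β` dominates `α` : every `w` sending `β` negative sends `α` negative. -/
def Dominates (β α : V) : Prop := ∀ w : W, G.ρ w β ∈ G.NegRoots → G.ρ w α ∈ G.NegRoots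

/-- A small root: a positive root dominating no positive root other than itself. -/
def IsSmall (β : V) : Prop :=
  β ∈ G.PosRoots ∧ ∀ α ∈ G.PosRoots, G.Dominates β α → α = β

/-- The conical (nonnegative) hull of a set. -/
def cone (X : Set V) : Set V :=
  {v | ∃ c : V →₀ ℝ, (∀ x, 0 ≤ c x) ∧ ↑c.support ⊆ X ∧ v = c.sum fun x a => a • x}

/-- Low element: its inversion set is the biconvex closure of its small inversions. -/
def IsLow (Sm : Set V) (w : W) : Prop :=
  G.invSet w = cone (G.invSet w ∩ Sm) ∩ G.PosRoots

/-- The closed fundamental chamber. -/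
def chamber : Set V := {v | ∀ i : B, 0 ≤ G.form v (G.root i)}

/-- The Tits cone `T = ⋃_{w ∈ W} w(C̄)`. -/
def titsCone : Set V := ⋃ w : W, ⇑(G.ρ w) '' G.chamber

end GeomRep

/-!
Every small root is reached from a simple root by short steps `β ↦ s i β`, in which
`form (root i) β < 0` and all roots are small, so by König's lemma it suffices that there is no
infinite chain of short steps. Along a chain a value `form (root i) β ≤ -1` stays `≤ -1`, and the
reflection `s i` is never used again. Hence from some point on only reflections `s i` with
`-1 < form (root i) β` are used. These values lie in a finite set, and together they determine a
small root within its class modulo the span of the `root i` in question. As heights increase along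
the chain, it cannot be infinite.

The finite set is the heart of the matter. A value `form α β ∈ (-1, 1)` for roots `α`, `β` makes the
product of the two reflections act with finite order on the plane of `α` and `β`. Averaging the
height over this action gives an interior point of the Tits cone that vanishes on `α` and `β`.
Moving it into the fundamental chamber moves `α` and `β` into a finite standard parabolic
subsystem, and there are only finitely many of these.
-/

section Recurrence

variable {K : Type*} [Field K] [LinearOrder K] [IsStrictOrderedRing K] [Archimedean K]
  {c : K} {x : ℕ → K}

theorem exists_nonpos_of_recurrence (hc : c < 1)
    (hx : ∀ n, x (n + 2) = 2 * c * x (n + 1) - x n) : ∃ n, x n ≤ 0 := by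
  by_contra! hpos
  have ratio_succ_le (n : ℕ) : x (n + 2) / x (n + 1) ≤ x (n + 1) / x n - 2 * (1 - c) := by
    have h₀ := hpos n
    have h₁ := hpos (n + 1)
    rw [hx, div_le_iff₀ h₁, sub_mul, div_mul_eq_mul_div, le_sub_iff_add_le, le_div_iff₀ h₀]
    nlinarith [sq_nonneg (x (n + 1) - x n)]
  have ratio_le (n : ℕ) : x (n + 1) / x n ≤ x 1 / x 0 - n * (2 * (1 - c)) := by
    induction n with
    | zero => simp
    | succ n ih => push_cast; linarith [ratio_succ_le n]
  obtain ⟨n, hn⟩ := exists_nat_gt (x 1 / x 0 / (2 * (1 - c)))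
  rw [div_lt_iff₀ (by linarith)] at hn
  linarith [ratio_le n, div_pos (hpos (n + 1)) (hpos n)]

theorem infinite_sign_changes_of_recurrence (hc : c < 1)
    (hx : ∀ n, x (n + 2) = 2 * c * x (n + 1) - x n) (hx₀ : ∀ n, x n ≠ 0) :
    {n | 0 < x n ∧ x (n + 1) < 0}.Infinite := by
  refine Set.infinite_of_forall_exists_gt fun N => ?_
  obtain ⟨k, hk⟩ := exists_nonpos_of_recurrence (x := fun n => -x (N + 1 + n)) hc
    fun n => by simp only [← add_assoc, hx]; ring
  have hpos : 0 < x (N + 1 + k) := (hx₀ _).lt_of_le' (by linarith)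
  have hneg : ∃ j, x (N + 1 + k + j) ≤ 0 :=
    exists_nonpos_of_recurrence hc fun n => hx (N + 1 + k + n)
  obtain ⟨j, hj⟩ : ∃ j, Nat.find hneg = j + 1 :=
    Nat.exists_eq_succ_of_ne_zero fun h => by
      have := Nat.find_spec hneg
      rw [h] at this
      exact this.not_gt hpos
  refine ⟨N + 1 + k + j, ⟨not_le.1 (Nat.find_min hneg (by lia)), ?_⟩, by lia⟩
  have := Nat.find_spec hneg
  rw [hj] at this
  exact (hx₀ _).lt_of_le this

end Recurrence

section Chebyshev

open Polynomial Polynomial.Chebyshev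

theorem eval_U_add_one {R : Type*} [CommRing R] (c : R) (n : ℤ) :
    (U R (n + 1)).eval c = 2 * c * (U R n).eval c - (U R (n - 1)).eval c := by
  simp [U_add_one]

theorem eval_U_sub_one_nonneg_and_add_one_le {R : Type*} [CommRing R] [LinearOrder R]
    [IsStrictOrderedRing R] {c : R} (hc : 1 ≤ c) (n : ℕ) :
    0 ≤ (U R (n - 1)).eval c ∧ (U R (n - 1)).eval c + 1 ≤ (U R n).eval c := by
  induction n with
  | zero => simp
  | succ n ih =>
    push_cast
    rw [eval_U_add_one, add_sub_cancel_right]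
    exact ⟨by linarith, by nlinarith⟩

theorem eval_U_cos_pi_div_nonneg {m : ℕ} (hm : 2 ≤ m) {k : ℤ} (hk : -1 ≤ k) (hkm : k < m) :
    0 ≤ (U ℝ k).eval (Real.cos (Real.pi / m)) := by
  have hm' : (1 : ℝ) < m := by exact_mod_cast hm
  have hk' : (0 : ℝ) ≤ k + 1 := by exact_mod_cast (by lia : 0 ≤ k + 1)
  have hkm' : (k : ℝ) + 1 ≤ m := by exact_mod_cast hkm
  have hsin : 0 < Real.sin (Real.pi / m) :=
    Real.sin_pos_of_pos_of_lt_pi (by positivity) (div_lt_self Real.pi_pos hm')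
  refine nonneg_of_mul_nonneg_left ?_ hsin
  rw [U_real_cos]
  refine Real.sin_nonneg_of_nonneg_of_le_pi (by positivity) ?_
  rw [mul_div_assoc', div_le_iff₀ (by linarith), mul_comm]
  gcongr

variable {R V V' : Type*} [CommRing R] [AddCommGroup V] [Module R V] [AddCommGroup V'] [Module R V']

/-- The vector `Uₙ(c) x + Uₙ₋₁(c) y`. When `x`, `y` are unit vectors with inner product `-c`,
alternately applying the reflections in `y` and in `x` to `x` produces vectors of this form, with
`x` and `y` exchanged at every step. -/
noncomputable def chebyshevComb (c : R) (n : ℕ) (x y : V) : V :=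
  (U R n).eval c • x + (U R (n - 1)).eval c • y

@[simp]
theorem chebyshevComb_zero (c : R) (x y : V) : chebyshevComb c 0 x y = x := by
  simp [chebyshevComb]

theorem map_chebyshevComb {F : Type*} [FunLike F V V'] [LinearMapClass F R V V'] (f : F)
    (c : R) (n : ℕ) (x y : V) :
    f (chebyshevComb c n x y) = chebyshevComb c n (f x) (f y) := by
  simp [chebyshevComb]

theorem chebyshevComb_succ (c : R) (n : ℕ) (x y : V) :
    chebyshevComb c (n + 1) y x = chebyshevComb c n (x + (2 * c) • y) (-y) := by
  simp only [chebyshevComb, Nat.cast_add, Nat.cast_one, eval_U_add_one, add_sub_cancel_right]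
  module

end Chebyshev

section CosetFactorization

open CoxeterSystem

variable {B W : Type*} [Group W] {M : CoxeterMatrix B} (cs : CoxeterSystem M W)

theorem exists_eq_mul_alternatingWord {w : W} {s t : B} (hs : ¬cs.IsRightDescent w s) :
    ∃ u j, w = u * cs.wordProd (alternatingWord s t j) ∧ cs.length w = cs.length u + j ∧
      ¬cs.IsRightDescent u s ∧ ¬cs.IsRightDescent u t := by
  induction hn : cs.length w using Nat.strong_induction_on generalizing w s t with
  | _ n ih =>
  subst hn
  by_cases ht : cs.IsRightDescent w t
  · obtain ⟨u, j, hw, hlen, hut, hus⟩ := ih _ ht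
      (cs.isRightDescent_iff_not_isRightDescent_mul.1 ht) (t := s) rfl
    refine ⟨u, j + 1, ?_, ?_, hus, hut⟩
    · rw [alternatingWord_succ, cs.wordProd_concat, ← mul_assoc, ← hw,
        cs.simple_mul_simple_cancel_right]
    · rw [← cs.isRightDescent_iff.1 ht, hlen, add_assoc]
  · exact ⟨w, 0, by simp [alternatingWord], rfl, hs, ht⟩

theorem lt_of_not_isRightDescent_mul_alternatingWord {u : W} {s t : B} {j : ℕ} (hM : M s t ≠ 0)
    (hs : ¬cs.IsRightDescent (u * cs.wordProd (alternatingWord s t j)) s)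
    (hlen : cs.length (u * cs.wordProd (alternatingWord s t j)) = cs.length u + j) :
    j < M s t := by
  by_contra! hj
  rw [cs.not_isRightDescent_iff, mul_assoc, ← cs.wordProd_concat, ← alternatingWord_succ,
    hlen] at hs
  have hnot := cs.not_isReduced_alternatingWord t s (m := j + 1)
    (by rwa [M.symmetric]) (by rw [M.symmetric]; lia)
  have hle := cs.length_wordProd_le (alternatingWord t s (j + 1))
  have := cs.length_mul_le u (cs.wordProd (alternatingWord t s (j + 1)))
  simp only [CoxeterSystem.IsReduced, length_alternatingWord] at hnot hle
  lia

end CosetFactorization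

namespace GeomRep

variable {B : Type*} {W : Type*} [Group W] {M : CoxeterMatrix B}
  {cs : CoxeterSystem M W} {V : Type*} [AddCommGroup V] [Module ℝ V]
  (G : GeomRep M cs V)

section Coordinates

theorem exists_coords :
    ∃ f : V →ₗ[ℝ] B →₀ ℝ, f ∘ₗ Finsupp.linearCombination ℝ G.root = LinearMap.id :=
  LinearMap.exists_leftInverse_of_injective _ (LinearMap.ker_eq_bot.2 G.root_indep)

/-- The coordinates with respect to the simple roots. The simple roots need not span `V`, so on a
complement of their span the values are arbitrary. -/
noncomputable def coords : V →ₗ[ℝ] B →₀ ℝ := G.exists_coords.choose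

theorem coords_linearCombination (c : B →₀ ℝ) :
    G.coords (Finsupp.linearCombination ℝ G.root c) = c :=
  LinearMap.congr_fun G.exists_coords.choose_spec c

theorem coords_root (i : B) : G.coords (G.root i) = Finsupp.single i 1 := by
  simpa using G.coords_linearCombination (Finsupp.single i 1)

variable {G} {u v : V}

theorem isNonnegComb_iff : G.IsNonnegComb v ↔
    0 ≤ G.coords v ∧ Finsupp.linearCombination ℝ G.root (G.coords v) = v := by
  constructor
  · rintro ⟨c, hc, rfl⟩
    rw [← Finsupp.linearCombination_apply, coords_linearCombination]
    exact ⟨hc, rfl⟩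
  · exact fun ⟨h, hv⟩ => ⟨_, h, hv.symm⟩

theorem IsNonnegComb.add (hu : G.IsNonnegComb u) (hv : G.IsNonnegComb v) :
    G.IsNonnegComb (u + v) := by
  rw [isNonnegComb_iff] at *
  simp only [map_add, hu.2, hv.2, and_true]
  exact add_nonneg hu.1 hv.1

theorem IsNonnegComb.smul {a : ℝ} (ha : 0 ≤ a) (hv : G.IsNonnegComb v) :
    G.IsNonnegComb (a • v) := by
  rw [isNonnegComb_iff] at *
  simp only [map_smul, hv.2, and_true]
  exact smul_nonneg ha hv.1

variable (G)

theorem isNonnegComb_root (i : B) : G.IsNonnegComb (G.root i) := by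
  rw [isNonnegComb_iff, coords_root]
  exact ⟨Finsupp.single_nonneg.2 zero_le_one, by simp⟩

/-- The height: the sum of the coordinates with respect to the simple roots. Its sign tells
positive roots from negative ones. -/
noncomputable def ht : V →ₗ[ℝ] ℝ := Finsupp.lsum ℝ (fun _ => LinearMap.id) ∘ₗ G.coords

theorem ht_apply (v : V) : G.ht v = (G.coords v).sum fun _ a => a := rfl

theorem ht_root (i : B) : G.ht (G.root i) = 1 := by
  simp [ht_apply, coords_root]

variable {G}

theorem IsNonnegComb.ht_nonneg (hv : G.IsNonnegComb v) : 0 ≤ G.ht v :=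
  Finsupp.sum_nonneg fun i _ => (isNonnegComb_iff.1 hv).1 i

theorem IsNonnegComb.eq_zero_of_ht_nonpos (hv : G.IsNonnegComb v) (h : G.ht v ≤ 0) : v = 0 := by
  have hsum := le_antisymm h hv.ht_nonneg
  rw [isNonnegComb_iff] at hv
  rw [ht_apply, Finsupp.sum, Finset.sum_eq_zero_iff_of_nonneg fun i _ => hv.1 i] at hsum
  have hcoords : G.coords v = 0 := by
    ext i
    by_contra hi
    exact hi (hsum i (Finsupp.mem_support_iff.2 hi))
  rw [← hv.2, hcoords, map_zero]

end Coordinates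

section Action

theorem form_root_self (i : B) : G.form (G.root i) (G.root i) = 1 := by
  rw [G.form_root_finite i i (by simp)]
  simp

theorem form_root_nonpos {i j : B} (hij : i ≠ j) : G.form (G.root i) (G.root j) ≤ 0 := by
  by_cases hM : M i j = 0
  · linarith [G.form_root_infinite i j hM]
  · rw [G.form_root_finite i j hM, neg_nonpos]
    have hM₂ : (2 : ℝ) ≤ M i j := by exact_mod_cast (by have := M.off_diagonal i j hij; lia)
    refine Real.cos_nonneg_of_neg_pi_div_two_le_of_le ?_ ?_
    · linarith [Real.pi_pos, div_nonneg Real.pi_pos.le (by linarith : (0 : ℝ) ≤ M i j)]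
    · gcongr

theorem rho_one_apply (x : V) : G.ρ 1 x = x := by
  rw [map_one, LinearEquiv.coe_one, id]

theorem rho_mul_apply (u v : W) (x : V) : G.ρ (u * v) x = G.ρ u (G.ρ v x) := by
  rw [map_mul, LinearEquiv.mul_apply]

theorem rho_simple_rho_simple (i : B) (x : V) :
    G.ρ (cs.simple i) (G.ρ (cs.simple i) x) = x := by
  rw [← rho_mul_apply, cs.simple_mul_simple_self, rho_one_apply]

theorem rho_simple_root (i : B) : G.ρ (cs.simple i) (G.root i) = -G.root i := by
  rw [G.simple_act, form_root_self]
  module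

theorem form_root_rho_simple (i : B) (x : V) :
    G.form (G.root i) (G.ρ (cs.simple i) x) = -G.form (G.root i) x := by
  rw [← G.form_preserved (cs.simple i), rho_simple_root, rho_simple_rho_simple, map_neg,
    LinearMap.neg_apply]

end Action

section Positivity

open CoxeterSystem Polynomial.Chebyshev

theorem rho_alternatingWord_root (s t : B) (j : ℕ) :
    G.ρ (cs.wordProd (alternatingWord s t j)) (G.root s) =
      chebyshevComb (-G.form (G.root s) (G.root t)) j
        (G.root (if Even j then s else t)) (G.root (if Even j then t else s)) := by
  induction j with
  | zero => simp [alternatingWord]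
  | succ j ih =>
    rw [alternatingWord_succ', wordProd_cons, rho_mul_apply, ih, map_chebyshevComb,
      rho_simple_root, G.simple_act]
    simp only [Nat.even_add_one]
    split_ifs
    · rw [chebyshevComb_succ, G.form_symm]
      congr 1
      module
    · rw [chebyshevComb_succ]
      congr 1
      module

theorem eval_U_neg_form_root_nonneg {s t : B} (hst : s ≠ t) {k : ℤ} (hk : -1 ≤ k)
    (hkM : M s t ≠ 0 → k < M s t) :
    0 ≤ (U ℝ k).eval (-G.form (G.root s) (G.root t)) := by
  by_cases hM : M s t = 0
  · have hc : 1 ≤ -G.form (G.root s) (G.root t) := by linarith [G.form_root_infinite s t hM]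
    obtain ⟨n, rfl⟩ : ∃ n : ℕ, k = n - 1 := ⟨(k + 1).toNat, by lia⟩
    exact (eval_U_sub_one_nonneg_and_add_one_le hc n).1
  · rw [G.form_root_finite s t hM, neg_neg]
    have := M.off_diagonal s t hst
    exact eval_U_cos_pi_div_nonneg (by lia) hk (hkM hM)

theorem isNonnegComb_rho_root {w : W} {s : B} (hs : ¬cs.IsRightDescent w s) :
    G.IsNonnegComb (G.ρ w (G.root s)) := by
  induction hn : cs.length w using Nat.strong_induction_on generalizing w s with
  | _ n ih =>
  subst hn
  by_cases hw : w = 1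
  · rw [hw, rho_one_apply]
    exact G.isNonnegComb_root s
  obtain ⟨t, ht⟩ := cs.exists_rightDescent_of_ne_one hw
  have hst : s ≠ t := fun h => hs (h ▸ ht)
  obtain ⟨u, j, rfl, hlen, hus, hut⟩ := exists_eq_mul_alternatingWord cs (t := t) hs
  have hj : 0 < j := by
    rw [Nat.pos_iff_ne_zero]
    rintro rfl
    simp [alternatingWord, hut] at ht
  have hjM (hM : M s t ≠ 0) : j < M s t :=
    lt_of_not_isRightDescent_mul_alternatingWord cs hM hs hlen
  have ih_u {i : B} (hi : ¬cs.IsRightDescent u i) : G.IsNonnegComb (G.ρ u (G.root i)) :=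
    ih _ (by lia) hi rfl
  rw [rho_mul_apply, rho_alternatingWord_root, map_chebyshevComb]
  refine .add (.smul ?_ (ih_u ?_)) (.smul ?_ (ih_u ?_))
  · exact G.eval_U_neg_form_root_nonneg hst (by lia) fun hM => by have := hjM hM; lia
  · split_ifs <;> assumption
  · exact G.eval_U_neg_form_root_nonneg hst (by lia) fun hM => by have := hjM hM; lia
  · split_ifs <;> assumption

theorem isNonnegComb_neg_rho_root {w : W} {s : B} (hs : cs.IsRightDescent w s) :
    G.IsNonnegComb (-G.ρ w (G.root s)) := by
  have := G.isNonnegComb_rho_root (cs.isRightDescent_iff_not_isRightDescent_mul.1 hs)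
  rwa [rho_mul_apply, rho_simple_root, map_neg] at this

end Positivity

section Roots

variable {G} {v : V} {i : B}

theorem mem_roots_root (i : B) : G.root i ∈ G.Roots := ⟨1, i, by rw [rho_one_apply]⟩

theorem rho_mem_roots (w : W) (hv : v ∈ G.Roots) : G.ρ w v ∈ G.Roots := by
  obtain ⟨u, i, rfl⟩ := hv
  exact ⟨w * u, i, by rw [rho_mul_apply]⟩

theorem neg_mem_roots (hv : v ∈ G.Roots) : -v ∈ G.Roots := by
  obtain ⟨u, i, rfl⟩ := hv
  exact ⟨u * cs.simple i, i, by rw [rho_mul_apply, rho_simple_root, map_neg]⟩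

theorem form_self_of_mem_roots (hv : v ∈ G.Roots) : G.form v v = 1 := by
  obtain ⟨u, i, rfl⟩ := hv
  rw [G.form_preserved, form_root_self]

theorem ne_zero_of_mem_roots (hv : v ∈ G.Roots) : v ≠ 0 := by
  rintro rfl
  simpa using form_self_of_mem_roots hv

theorem mem_posRoots_or_mem_negRoots (hv : v ∈ G.Roots) : v ∈ G.PosRoots ∨ v ∈ G.NegRoots := by
  obtain ⟨u, i, rfl⟩ := id hv
  by_cases h : cs.IsRightDescent u i
  · exact .inr ⟨hv, G.isNonnegComb_neg_rho_root h⟩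
  · exact .inl ⟨hv, G.isNonnegComb_rho_root h⟩

theorem ht_pos (hv : v ∈ G.PosRoots) : 0 < G.ht v := by
  by_contra! h
  exact ne_zero_of_mem_roots hv.1 (hv.2.eq_zero_of_ht_nonpos h)

theorem neg_mem_posRoots_iff : -v ∈ G.PosRoots ↔ v ∈ G.NegRoots :=
  and_congr_left fun _ => ⟨fun h => neg_neg v ▸ neg_mem_roots h, neg_mem_roots⟩

theorem ht_neg (hv : v ∈ G.NegRoots) : G.ht v < 0 := by
  simpa using ht_pos (neg_mem_posRoots_iff.2 hv)

theorem mem_posRoots_iff_ht_pos (hv : v ∈ G.Roots) : v ∈ G.PosRoots ↔ 0 < G.ht v :=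
  ⟨ht_pos, fun h => (mem_posRoots_or_mem_negRoots hv).resolve_right fun h' => (ht_neg h').not_gt h⟩

theorem mem_negRoots_iff_ht_neg (hv : v ∈ G.Roots) : v ∈ G.NegRoots ↔ G.ht v < 0 :=
  ⟨ht_neg, fun h => (mem_posRoots_or_mem_negRoots hv).resolve_left fun h' => (ht_pos h').not_gt h⟩

theorem ht_ne_zero (hv : v ∈ G.Roots) : G.ht v ≠ 0 :=
  (mem_posRoots_or_mem_negRoots hv).elim (fun h => (ht_pos h).ne') (fun h => (ht_neg h).ne)

theorem root_mem_posRoots (i : B) : G.root i ∈ G.PosRoots :=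
  ⟨mem_roots_root i, G.isNonnegComb_root i⟩

theorem eq_root_of_coords_eq_zero (hv : v ∈ G.PosRoots) (h : ∀ j ≠ i, G.coords v j = 0) :
    v = G.root i := by
  have hcoords : G.coords v = Finsupp.single i (G.coords v i) := by
    ext j
    by_cases hj : j = i
    · simp [hj]
    · rw [h j hj, Finsupp.single_eq_of_ne hj]
  obtain ⟨hnonneg, hv'⟩ := isNonnegComb_iff.1 hv.2
  rw [hcoords, Finsupp.linearCombination_single] at hv'
  have hnorm := form_self_of_mem_roots hv.1
  rw [← hv', map_smul, map_smul, LinearMap.smul_apply, form_root_self] at hnorm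
  have : G.coords v i = 1 := by
    have : 0 ≤ G.coords v i := hnonneg i
    simp only [smul_eq_mul, mul_one] at hnorm
    nlinarith
  rw [← hv', this, one_smul]

theorem rho_simple_mem_posRoots (hv : v ∈ G.PosRoots) (hne : v ≠ G.root i) :
    G.ρ (cs.simple i) v ∈ G.PosRoots := by
  refine (mem_posRoots_or_mem_negRoots (rho_mem_roots _ hv.1)).resolve_right fun hneg => ?_
  refine hne (eq_root_of_coords_eq_zero hv fun j hj => le_antisymm ?_ ?_)
  · have : 0 ≤ G.coords (-G.ρ (cs.simple i) v) j := (isNonnegComb_iff.1 hneg.2).1 j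
    simpa [G.simple_act, coords_root, Finsupp.single_eq_of_ne hj] using this
  · exact (isNonnegComb_iff.1 hv.2).1 j

theorem invSet_finite (w : W) : (G.invSet w).Finite := by
  induction w using cs.simple_induction_left with
  | one =>
    refine Set.finite_empty.subset fun v ⟨hv, hv'⟩ => ?_
    rw [inv_one, rho_one_apply] at hv'
    exact (ht_pos hv).not_gt (ht_neg hv')
  | mul_simple_left w i ih =>
    refine ((ih.image (G.ρ (cs.simple i))).insert (G.root i)).subset fun v ⟨hv, hv'⟩ => ?_
    rw [mul_inv_rev, cs.inv_simple, rho_mul_apply] at hv'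
    refine or_iff_not_imp_left.2 fun hne => ?_
    exact ⟨_, ⟨rho_simple_mem_posRoots hv hne, hv'⟩, G.rho_simple_rho_simple i v⟩

theorem mem_invSet_inv {w : W} :
    v ∈ G.invSet w⁻¹ ↔ v ∈ G.PosRoots ∧ G.ρ w v ∈ G.NegRoots := by
  rw [invSet, inv_inv, Set.mem_ofPred_eq]

theorem refl_apply (α x : V) : G.refl α x = x - (2 * G.form α x) • α := by
  simp [refl, mul_smul]

theorem exists_rho_eq_refl {α : V} (hα : α ∈ G.Roots) : ∃ t : W, ∀ x, G.ρ t x = G.refl α x := by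
  obtain ⟨u, i, rfl⟩ := hα
  refine ⟨u * cs.simple i * u⁻¹, fun x => ?_⟩
  have rho_rho_inv (y : V) : G.ρ u (G.ρ u⁻¹ y) = y := by simp
  rw [rho_mul_apply, rho_mul_apply, G.simple_act, map_sub, map_smul, rho_rho_inv, refl_apply,
    ← G.form_preserved u (G.root i), rho_rho_inv]

theorem refl_mem_roots {α : V} (hα : α ∈ G.Roots) (hv : v ∈ G.Roots) :
    G.refl α v ∈ G.Roots := by
  obtain ⟨t, ht⟩ := exists_rho_eq_refl hα
  exact ht v ▸ rho_mem_roots t hv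

end Roots

section Dominance

variable {G} {α β γ δ : V}

theorem chebyshevComb_mem_roots {c : ℝ} (hα : α ∈ G.Roots) (hβ : β ∈ G.Roots)
    (h : G.form α β = -c) (n : ℕ) : chebyshevComb c n α β ∈ G.Roots := by
  induction n generalizing α β with
  | zero => rwa [chebyshevComb_zero]
  | succ n ih =>
    have hrefl : G.refl α β = β + (2 * c) • α := by
      rw [refl_apply, h]
      module
    rw [chebyshevComb_succ, ← hrefl]
    refine ih (refl_mem_roots hα hβ) (neg_mem_roots hα) ?_
    simp only [hrefl, map_add, map_smul, map_neg, LinearMap.add_apply, LinearMap.smul_apply,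
      smul_eq_mul, form_self_of_mem_roots hα, G.form_symm β α, h]
    ring

theorem not_rho_mem_negRoots_of_form_le_neg_one (hγ : γ ∈ G.PosRoots) (hδ : δ ∈ G.PosRoots)
    (h : G.form γ δ ≤ -1) (w : W) : ¬(G.ρ w γ ∈ G.NegRoots ∧ G.ρ w δ ∈ G.NegRoots) := by
  rintro ⟨hwγ, hwδ⟩
  obtain ⟨c, hc, hform⟩ : ∃ c, 1 ≤ c ∧ G.form γ δ = -c := ⟨-G.form γ δ, by linarith, by ring⟩
  let v (n : ℕ) : V := chebyshevComb c n γ δ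
  have hv (n : ℕ) : v n ∈ G.Roots := chebyshevComb_mem_roots hγ.1 hδ.1 hform n
  have hU := eval_U_sub_one_nonneg_and_add_one_le hc
  have hmono : StrictMono fun n => G.ht (v n) := by
    refine strictMono_nat_of_lt_succ fun n => ?_
    have hγn := mul_le_mul_of_nonneg_right (hU (n + 1)).2 (ht_pos hγ).le
    have hδn := mul_le_mul_of_nonneg_right (hU n).2 (ht_pos hδ).le
    simp only [Nat.cast_add, Nat.cast_one, add_sub_cancel_right] at hγn
    simp only [v, chebyshevComb, map_add, map_smul, smul_eq_mul, Nat.cast_add, Nat.cast_one,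
      add_sub_cancel_right]
    linarith [ht_pos hγ, ht_pos hδ]
  have hpos (n : ℕ) : v n ∈ G.PosRoots := by
    refine (mem_posRoots_iff_ht_pos (hv n)).2 ((ht_pos hγ).trans_le ?_)
    simpa [v] using hmono.monotone n.zero_le
  have hneg (n : ℕ) : G.ρ w (v n) ∈ G.NegRoots := by
    rw [mem_negRoots_iff_ht_neg (rho_mem_roots w (hv n))]
    simp only [v, chebyshevComb, map_add, map_smul, smul_eq_mul]
    nlinarith [hU n, ht_neg hwγ, ht_neg hwδ]
  have hinj : Function.Injective v := fun m n hmn => hmono.injective (congrArg G.ht hmn)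
  exact Set.infinite_of_injective_forall_mem hinj
    (fun n => mem_invSet_inv.2 ⟨hpos n, hneg n⟩) (G.invSet_finite w⁻¹)

theorem dominates_or_dominates (hα : α ∈ G.PosRoots) (hβ : β ∈ G.PosRoots)
    (h : 1 ≤ G.form α β) : G.Dominates α β ∨ G.Dominates β α := by
  by_contra! hcon
  simp only [Dominates, not_forall] at hcon
  obtain ⟨⟨u, huα, huβ⟩, w, hwβ, hwα⟩ := hcon
  have pos_of_not_neg {γ : V} {x : W} (hγ : γ ∈ G.PosRoots) (hx : G.ρ x γ ∉ G.NegRoots) :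
      G.ρ x γ ∈ G.PosRoots :=
    (mem_posRoots_or_mem_negRoots (rho_mem_roots x hγ.1)).resolve_right hx
  refine not_rho_mem_negRoots_of_form_le_neg_one (neg_mem_posRoots_iff.2 huα)
    (pos_of_not_neg hβ huβ) ?_ (w * u⁻¹) ⟨?_, ?_⟩
  · rw [map_neg, LinearMap.neg_apply, G.form_preserved]
    linarith
  · rw [map_neg, ← rho_mul_apply, inv_mul_cancel_right, ← neg_mem_posRoots_iff, neg_neg]
    exact pos_of_not_neg hα hwα
  · rwa [← rho_mul_apply, inv_mul_cancel_right]

theorem IsSmall.eq_of_one_le_form (hα : G.IsSmall α) (hβ : G.IsSmall β) (h : 1 ≤ G.form α β) :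
    α = β :=
  (dominates_or_dominates hα.1 hβ.1 h).elim (fun hd => (hα.2 β hβ.1 hd).symm) (hβ.2 α hα.1)

theorem isSmall_root (i : B) : G.IsSmall (G.root i) := by
  refine ⟨root_mem_posRoots i, fun γ hγ hd => ?_⟩
  by_contra hne
  refine (ht_neg (hd (cs.simple i) ?_)).not_gt (ht_pos (rho_simple_mem_posRoots hγ hne))
  rw [rho_simple_root, ← neg_mem_posRoots_iff, neg_neg]
  exact root_mem_posRoots i

end Dominance

section InnerProducts

variable {G} {α β γ : V}

theorem exists_rho_pow_eq_self {w : W} {c : ℝ} (hγ : γ ∈ G.Roots) (hc : c < 1)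
    (h : G.ρ w (G.ρ w γ) = (2 * c) • G.ρ w γ - γ) : ∃ m > 0, G.ρ (w ^ m) γ = γ := by
  have rho_pow_succ (n : ℕ) : G.ρ (w ^ (n + 1)) γ = G.ρ w (G.ρ (w ^ n) γ) := by
    rw [pow_succ', rho_mul_apply]
  have hrec (n : ℕ) : G.ht (G.ρ (w ^ (n + 2)) γ) =
      2 * c * G.ht (G.ρ (w ^ (n + 1)) γ) - G.ht (G.ρ (w ^ n) γ) := by
    rw [pow_add, pow_succ w n, pow_two, rho_mul_apply, rho_mul_apply, rho_mul_apply, h]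
    simp only [map_sub, map_smul, smul_eq_mul]
  have hinf := infinite_sign_changes_of_recurrence hc hrec
    fun n => ht_ne_zero (rho_mem_roots _ hγ)
  have hmaps : Set.MapsTo (fun n => G.ρ (w ^ n) γ)
      {n | 0 < G.ht (G.ρ (w ^ n) γ) ∧ G.ht (G.ρ (w ^ (n + 1)) γ) < 0} (G.invSet w⁻¹) := by
    rintro n ⟨hpos, hneg⟩
    rw [← mem_posRoots_iff_ht_pos (rho_mem_roots _ hγ)] at hpos
    rw [← mem_negRoots_iff_ht_neg (rho_mem_roots _ hγ), rho_pow_succ] at hneg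
    exact mem_invSet_inv.2 ⟨hpos, hneg⟩
  obtain ⟨a, -, b, -, hab, heq⟩ := hinf.exists_lt_map_eq_of_mapsTo hmaps (G.invSet_finite w⁻¹)
  refine ⟨b - a, Nat.sub_pos_of_lt hab, (G.ρ (w ^ a)).injective ?_⟩
  rw [← rho_mul_apply, ← pow_add, Nat.add_sub_cancel' hab.le]
  exact heq.symm

/-- A linear form that is positive on all but finitely many positive roots, i.e. an interior point
of the Tits cone viewed in the dual of `V`. -/
def IsTitsInterior (G : GeomRep M cs V) (f : V →ₗ[ℝ] ℝ) : Prop :=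
  {v ∈ G.PosRoots | f v ≤ 0}.Finite

/-- The sum of the heights of `x, r x, …, r ^ (m - 1) x`: the height averaged over the action of `r`,
up to a factor `m`. -/
noncomputable def orbitHeight (G : GeomRep M cs V) (r : W) (m : ℕ) : V →ₗ[ℝ] ℝ :=
  ∑ j ∈ Finset.range m, G.ht ∘ₗ (G.ρ (r ^ j)).toLinearMap

theorem orbitHeight_apply (r : W) (m : ℕ) (x : V) :
    G.orbitHeight r m x = ∑ j ∈ Finset.range m, G.ht (G.ρ (r ^ j) x) := by
  simp [orbitHeight]

theorem orbitHeight_rho {r : W} {m : ℕ} {x : V} (hx : G.ρ (r ^ m) x = x) :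
    G.orbitHeight r m (G.ρ r x) = G.orbitHeight r m x := by
  simp only [orbitHeight_apply, ← rho_mul_apply, ← pow_succ]
  have := (Finset.sum_range_succ' (fun j => G.ht (G.ρ (r ^ j) x)) m).symm.trans
    (Finset.sum_range_succ _ m)
  rwa [hx, pow_zero, rho_one_apply, add_left_inj] at this

theorem isTitsInterior_orbitHeight (r : W) {m : ℕ} (hm : 0 < m) :
    G.IsTitsInterior (G.orbitHeight r m) := by
  refine (Set.finite_iUnion fun j : Fin m => G.invSet_finite (r ^ (j : ℕ))⁻¹).subset ?_
  rintro v ⟨hv, hle⟩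
  by_contra hmem
  refine hle.not_gt ?_
  rw [orbitHeight_apply]
  refine Finset.sum_pos (fun j hj => ?_) (Finset.nonempty_range_iff.2 hm.ne')
  refine ht_pos ((mem_posRoots_or_mem_negRoots (rho_mem_roots _ hv.1)).resolve_right fun hneg => ?_)
  exact hmem (Set.mem_iUnion.2 ⟨⟨j, Finset.mem_range.1 hj⟩, mem_invSet_inv.2 ⟨hv, hneg⟩⟩)

theorem IsTitsInterior.comp_rho {f : V →ₗ[ℝ] ℝ} (hf : G.IsTitsInterior f) (w : W) :
    G.IsTitsInterior (f ∘ₗ (G.ρ w).toLinearMap) := by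
  refine ((G.invSet_finite w⁻¹).union (hf.preimage (G.ρ w).injective.injOn)).subset ?_
  rintro v ⟨hv, hle⟩
  rcases mem_posRoots_or_mem_negRoots (rho_mem_roots w hv.1) with hpos | hneg
  · exact .inr ⟨hpos, hle⟩
  · exact .inl (mem_invSet_inv.2 ⟨hv, hneg⟩)

theorem IsTitsInterior.exists_forall_nonneg {f : V →ₗ[ℝ] ℝ} (hf : G.IsTitsInterior f) :
    ∃ w, ∀ i, 0 ≤ f (G.ρ w (G.root i)) := by
  let N (w : W) : Set V := {v ∈ G.PosRoots | f (G.ρ w v) < 0}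
  have hN (w : W) : (N w).Finite := (hf.comp_rho w).subset fun v hv => ⟨hv.1, hv.2.le⟩
  obtain ⟨w, hmin⟩ : ∃ w, ∀ u, (N w).ncard ≤ (N u).ncard :=
    ⟨_, fun u => Function.argmin_le (fun w => (N w).ncard) u⟩
  refine ⟨w, fun i => ?_⟩
  by_contra! hlt
  have hmaps : G.ρ (cs.simple i) '' N (w * cs.simple i) ⊆ N w \ {G.root i} := by
    rintro _ ⟨v, ⟨hv, hneg⟩, rfl⟩
    rw [rho_mul_apply] at hneg
    have hne : v ≠ G.root i := by
      rintro rfl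
      rw [rho_simple_root, map_neg, map_neg] at hneg
      linarith
    refine ⟨⟨rho_simple_mem_posRoots hv hne, hneg⟩, fun heq => ?_⟩
    rw [Set.mem_singleton_iff] at heq
    have := ht_pos hv
    rw [← G.rho_simple_rho_simple i v, heq, rho_simple_root, map_neg, ht_root] at this
    linarith
  have hcard := Set.ncard_le_ncard hmaps (hN w).sdiff
  rw [Set.ncard_image_of_injective _ (G.ρ _).injective] at hcard
  have hdrop : (N w \ {G.root i}).ncard < (N w).ncard :=
    Set.ncard_sdiff_singleton_lt_of_mem ⟨root_mem_posRoots i, hlt⟩ (hN w)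
  exact ((hmin _).trans hcard).not_gt hdrop

theorem rho_pow_mul_eq_self {w : W} {m : ℕ} {x : V} (hx : G.ρ (w ^ m) x = x) (n : ℕ) :
    G.ρ (w ^ (m * n)) x = x := by
  rw [pow_mul]
  induction n with
  | zero => rw [pow_zero, rho_one_apply]
  | succ n ih => rw [pow_succ, rho_mul_apply, hx, ih]

theorem exists_isTitsInterior_vanishing (hα : α ∈ G.Roots) (hβ : β ∈ G.Roots)
    (h : |G.form α β| < 1) : ∃ f, G.IsTitsInterior f ∧ f α = 0 ∧ f β = 0 := by
  obtain ⟨tα, htα⟩ := exists_rho_eq_refl hα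
  obtain ⟨tβ, htβ⟩ := exists_rho_eq_refl hβ
  set c := G.form α β with hc
  have hc₂ : c ^ 2 < 1 := (sq_lt_one_iff_abs_lt_one c).2 h
  set r := tα * tβ
  have hrα : G.ρ r α = (4 * c ^ 2 - 1) • α - (2 * c) • β := by
    simp only [r, rho_mul_apply, htα, htβ, refl_apply, map_sub, map_smul, G.form_symm β α, ← hc,
      form_self_of_mem_roots hα]
    module
  have hrβ : G.ρ r β = (2 * c) • α - β := by
    simp only [r, rho_mul_apply, htα, htβ, refl_apply, map_sub, map_smul, ← hc,
      form_self_of_mem_roots hβ]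
    module
  obtain ⟨m, hm, hmα⟩ := exists_rho_pow_eq_self (w := r) (c := 2 * c ^ 2 - 1) hα (by linarith) (by
    simp only [hrα, hrβ, map_sub, map_smul]
    module)
  obtain ⟨n, hn, hnβ⟩ := exists_rho_pow_eq_self (w := r) (c := 2 * c ^ 2 - 1) hβ (by linarith) (by
    simp only [hrα, hrβ, map_sub, map_smul]
    module)
  let f := G.orbitHeight r (m * n)
  have hfα : f (G.ρ r α) = f α := orbitHeight_rho (rho_pow_mul_eq_self hmα n)
  have hfβ : f (G.ρ r β) = f β := orbitHeight_rho (mul_comm n m ▸ rho_pow_mul_eq_self hnβ m)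
  rw [hrα, map_sub, map_smul, map_smul, smul_eq_mul, smul_eq_mul] at hfα
  rw [hrβ, map_sub, map_smul, smul_eq_mul] at hfβ
  have hβα : f β = c * f α := by linarith
  have hα₀ : f α = 0 := by
    rw [hβα] at hfα
    have : (1 - c ^ 2) * f α = 0 := by linarith
    exact (mul_eq_zero.1 this).resolve_left (by linarith)
  exact ⟨f, isTitsInterior_orbitHeight r (Nat.mul_pos hm hn), hα₀, by rw [hβα, hα₀, mul_zero]⟩

/-- The roots of the standard parabolic subsystem spanned by the simple roots in `J`. -/
def parabolicRoots (G : GeomRep M cs V) (J : Set B) : Set V :=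
  {v ∈ G.Roots | ∀ i ∉ J, G.coords v i = 0}

theorem linearCombination_coords (hγ : γ ∈ G.Roots) :
    Finsupp.linearCombination ℝ G.root (G.coords γ) = γ := by
  rcases mem_posRoots_or_mem_negRoots hγ with h | h
  · exact (isNonnegComb_iff.1 h.2).2
  · simpa using (isNonnegComb_iff.1 h.2).2

theorem map_eq_sum_coords (f : V →ₗ[ℝ] ℝ) (hγ : γ ∈ G.Roots) :
    f γ = (G.coords γ).sum fun i a => a * f (G.root i) := by
  conv_lhs => rw [← linearCombination_coords hγ]
  simp [Finsupp.linearCombination_apply, Finsupp.sum]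

theorem mem_parabolicRoots_iff {f : V →ₗ[ℝ] ℝ} (hf : ∀ i, 0 ≤ f (G.root i)) (hγ : γ ∈ G.Roots) :
    γ ∈ G.parabolicRoots {i | f (G.root i) = 0} ↔ f γ = 0 := by
  wlog hpos : γ ∈ G.PosRoots generalizing γ
  · have hneg := (mem_posRoots_or_mem_negRoots hγ).resolve_left hpos
    simpa [parabolicRoots, hγ, neg_mem_roots hγ] using
      this (neg_mem_roots hγ) (neg_mem_posRoots_iff.2 hneg)
  have hterm (i : B) : 0 ≤ G.coords γ i * f (G.root i) :=
    mul_nonneg ((isNonnegComb_iff.1 hpos.2).1 i) (hf i)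
  rw [map_eq_sum_coords f hγ, Finsupp.sum, Finset.sum_eq_zero_iff_of_nonneg fun i _ => hterm i]
  simp only [parabolicRoots, Set.mem_ofPred_eq, hγ, true_and, Finsupp.mem_support_iff, mul_eq_zero]
  grind

theorem IsTitsInterior.parabolicRoots_finite {f : V →ₗ[ℝ] ℝ} (hf : G.IsTitsInterior f)
    (hf₀ : ∀ i, 0 ≤ f (G.root i)) : (G.parabolicRoots {i | f (G.root i) = 0}).Finite := by
  refine (hf.union (hf.preimage (neg_injective (G := V)).injOn)).subset fun v hv => ?_
  have hzero : f v = 0 := (mem_parabolicRoots_iff hf₀ hv.1).1 hv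
  rcases mem_posRoots_or_mem_negRoots hv.1 with hpos | hneg
  · exact .inl ⟨hpos, hzero.le⟩
  · exact .inr ⟨neg_mem_posRoots_iff.2 hneg, by rw [map_neg, hzero, neg_zero]⟩

variable (G) in
theorem form_abs_lt_one_finite [Finite B] :
    {c | |c| < 1 ∧ ∃ α ∈ G.Roots, ∃ β ∈ G.Roots, G.form α β = c}.Finite := by
  have hfin : (⋃ J : {J : Set B // (G.parabolicRoots J).Finite},
      Set.image2 (fun α β => G.form α β) (G.parabolicRoots J) (G.parabolicRoots J)).Finite :=
    Set.finite_iUnion fun J => J.2.image2 _ J.2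
  refine hfin.subset ?_
  rintro _ ⟨h, α, hα, β, hβ, rfl⟩
  obtain ⟨f, hf, hfα, hfβ⟩ := exists_isTitsInterior_vanishing hα hβ h
  obtain ⟨w, hw⟩ := hf.exists_forall_nonneg
  have mem_parabolic {γ : V} (hγ : γ ∈ G.Roots) (hfγ : f γ = 0) :
      G.ρ w⁻¹ γ ∈ G.parabolicRoots {i | f (G.ρ w (G.root i)) = 0} :=
    (mem_parabolicRoots_iff (f := f ∘ₗ (G.ρ w).toLinearMap) hw (rho_mem_roots _ hγ)).2
      (by simp [hfγ])
  exact Set.mem_iUnion.2 ⟨⟨_, (hf.comp_rho w).parabolicRoots_finite hw⟩,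
    G.ρ w⁻¹ α, mem_parabolic hα hfα, G.ρ w⁻¹ β, mem_parabolic hβ hfβ, G.form_preserved w⁻¹ α β⟩

end InnerProducts

section ShortSteps

variable {G} {β β' : V} {i j : B}

theorem IsSmall.rho_simple (hβ : G.IsSmall β) (hne : β ≠ G.root i)
    (hform : 0 < G.form (G.root i) β) : G.IsSmall (G.ρ (cs.simple i) β) := by
  have hpos : G.ρ (cs.simple i) β ∈ G.PosRoots := rho_simple_mem_posRoots hβ.1 hne
  refine ⟨hpos, fun γ hγ hd => ?_⟩
  by_cases hγi : γ = G.root i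
  · -- The reflection in `s i β` sends `s i β` to a negative root but `root i` to a positive one.
    exfalso
    subst hγi
    obtain ⟨t, ht⟩ := exists_rho_eq_refl hpos.1
    have hneg : G.ρ t (G.ρ (cs.simple i) β) ∈ G.NegRoots := by
      rw [mem_negRoots_iff_ht_neg (rho_mem_roots t hpos.1), ht, refl_apply,
        form_self_of_mem_roots hpos.1, map_sub, map_smul, smul_eq_mul]
      linarith [ht_pos hpos]
    have := ht_neg (hd t hneg)
    rw [ht, refl_apply, G.form_symm, form_root_rho_simple, map_sub, map_smul, ht_root,
      smul_eq_mul] at this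
    nlinarith [ht_pos hpos]
  · have hd' : G.Dominates β (G.ρ (cs.simple i) γ) := fun w hw => by
      rw [← rho_mul_apply]
      apply hd
      rwa [rho_mul_apply, rho_simple_rho_simple]
    rw [← hβ.2 _ (rho_simple_mem_posRoots hγ hγi) hd', rho_simple_rho_simple]

/-- A short step in the root poset: a simple reflection that takes a small root up to another
small root. -/
def ShortStep (G : GeomRep M cs V) (β β' : V) : Prop :=
  G.IsSmall β ∧ G.IsSmall β' ∧ ∃ i, G.form (G.root i) β < 0 ∧ β' = G.ρ (cs.simple i) β

theorem IsSmall.exists_reflTransGen_shortStep (hβ : G.IsSmall β) :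
    ∃ i, Relation.ReflTransGen G.ShortStep (G.root i) β := by
  obtain ⟨w, hw⟩ : ∃ w, G.ρ w β ∈ G.NegRoots := by
    obtain ⟨t, ht⟩ := exists_rho_eq_refl hβ.1.1
    refine ⟨t, (mem_negRoots_iff_ht_neg (rho_mem_roots t hβ.1.1)).2 ?_⟩
    rw [ht, refl_apply, form_self_of_mem_roots hβ.1.1, map_sub, map_smul, smul_eq_mul]
    linarith [ht_pos hβ.1]
  induction hn : cs.length w using Nat.strong_induction_on generalizing w β with
  | _ n ih =>
  subst hn
  have hw₁ : w ≠ 1 := by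
    rintro rfl
    rw [rho_one_apply] at hw
    exact (ht_neg hw).not_gt (ht_pos hβ.1)
  obtain ⟨s, hs⟩ := cs.exists_rightDescent_of_ne_one hw₁
  by_cases hne : β = G.root s
  · exact ⟨s, hne ▸ .refl⟩
  by_cases hform : 0 < G.form (G.root s) β
  · have hsβ := hβ.rho_simple hne hform
    obtain ⟨i, hi⟩ := ih _ hs hsβ (w * cs.simple s)
      (by rwa [rho_mul_apply, rho_simple_rho_simple]) rfl
    refine ⟨i, hi.tail ⟨hsβ, hβ, s, ?_, (G.rho_simple_rho_simple s β).symm⟩⟩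
    rw [form_root_rho_simple]
    linarith
  · refine ih _ hs hβ (w * cs.simple s) ?_ rfl
    rw [mem_negRoots_iff_ht_neg (rho_mem_roots _ hβ.1.1), rho_mul_apply, G.simple_act, map_sub,
      map_smul, map_sub, map_smul, smul_eq_mul]
    have hws : G.ht (G.ρ w (G.root s)) < 0 :=
      ht_neg ⟨rho_mem_roots w (mem_roots_root s), G.isNonnegComb_neg_rho_root hs⟩
    nlinarith [ht_neg hw]

theorem neg_one_lt_form_root (hβ : G.IsSmall β) (hsβ : G.IsSmall (G.ρ (cs.simple i) β)) :
    -1 < G.form (G.root i) β := by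
  by_contra! hle
  have heq : G.root i = G.ρ (cs.simple i) β :=
    (isSmall_root i).eq_of_one_le_form hsβ (by rw [form_root_rho_simple]; linarith)
  have := ht_pos hβ.1
  rw [← G.rho_simple_rho_simple i β, ← heq, rho_simple_root, map_neg, ht_root] at this
  linarith

theorem ShortStep.form_root_le_neg_one (h : G.ShortStep β β')
    (hj : G.form (G.root j) β ≤ -1) : G.form (G.root j) β' ≤ -1 := by
  obtain ⟨hβ, hsβ, i, hi, rfl⟩ := h
  have hij : j ≠ i := by
    rintro rfl
    exact (neg_one_lt_form_root hβ hsβ).not_ge hj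
  rw [G.simple_act, map_sub, map_smul, smul_eq_mul]
  nlinarith [G.form_root_nonpos hij]

theorem ShortStep.ht_lt (h : G.ShortStep β β') : G.ht β < G.ht β' := by
  obtain ⟨-, -, i, hi, rfl⟩ := h
  rw [G.simple_act, map_sub, map_smul, smul_eq_mul, ht_root]
  linarith

theorem ShortStep.sub_mem_span (h : G.ShortStep β β') :
    β' - β ∈ Submodule.span ℝ (G.root '' {i | -1 < G.form (G.root i) β}) := by
  obtain ⟨hβ, hsβ, i, -, rfl⟩ := h
  rw [G.simple_act, sub_sub_cancel_left]
  exact neg_mem (Submodule.smul_mem _ _ (Submodule.subset_span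
    ⟨i, neg_one_lt_form_root hβ hsβ, rfl⟩))

theorem IsSmall.eq_of_form_eq_on {J : Set B} (hβ : G.IsSmall β) (hβ' : G.IsSmall β')
    (hmem : β - β' ∈ Submodule.span ℝ (G.root '' J))
    (hform : ∀ i ∈ J, G.form (G.root i) β = G.form (G.root i) β') : β = β' := by
  have hker : Submodule.span ℝ (G.root '' J) ≤ LinearMap.ker (G.form (β - β')) := by
    rw [Submodule.span_le]
    rintro _ ⟨i, hi, rfl⟩
    rw [SetLike.mem_coe, LinearMap.mem_ker, G.form_symm, map_sub, hform i hi, sub_self]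
  have hself : G.form (β - β') (β - β') = 0 := hker hmem
  simp only [map_sub, LinearMap.sub_apply, form_self_of_mem_roots hβ.1.1,
    form_self_of_mem_roots hβ'.1.1, G.form_symm β' β] at hself
  exact hβ.eq_of_one_le_form hβ' (by linarith)

section FiniteRank

variable [Finite B]

variable (G) in
theorem form_root_small_finite :
    {c | -1 < c ∧ ∃ β, G.IsSmall β ∧ ∃ i, G.form (G.root i) β = c}.Finite := by
  refine (G.form_abs_lt_one_finite.insert 1).subset ?_
  rintro _ ⟨hlt, β, hβ, i, rfl⟩
  rcases lt_or_ge (G.form (G.root i) β) 1 with h | h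
  · exact .inr ⟨abs_lt.2 ⟨hlt, h⟩, _, mem_roots_root i, β, hβ.1.1, rfl⟩
  · exact .inl (by rw [← (isSmall_root i).eq_of_one_le_form hβ h, form_root_self])

theorem not_forall_shortStep (f : ℕ → V) : ¬∀ n, G.ShortStep (f n) (f (n + 1)) := by
  intro hf
  let D : ℕ →o Set B := ⟨fun n => {i | G.form (G.root i) (f n) ≤ -1},
    monotone_nat_of_le_succ fun n _ => (hf n).form_root_le_neg_one⟩
  obtain ⟨N, hN⟩ := WellFoundedGT.monotone_chain_condition D
  have mem_D_compl (n : ℕ) {i : B} : i ∈ (D N)ᶜ ↔ -1 < G.form (G.root i) (f (N + n)) := by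
    rw [hN (N + n) (N.le_add_right n)]
    exact not_le (α := ℝ)
  have hspan (n : ℕ) : f (N + n) - f N ∈ Submodule.span ℝ (G.root '' (D N)ᶜ) := by
    induction n with
    | zero => simp
    | succ n ih =>
      have hstep := (hf (N + n)).sub_mem_span
      simp only [← mem_D_compl n] at hstep
      exact sub_add_sub_cancel (f (N + n + 1)) (f (N + n)) (f N) ▸ add_mem hstep ih
  have hinj : Function.Injective fun n (i : ↥(D N)ᶜ) => G.form (G.root i) (f (N + n)) := by
    intro m n hmn
    have heq : f (N + m) = f (N + n) := by
      refine (hf _).1.eq_of_form_eq_on (hf _).1 (J := (D N)ᶜ) ?_ fun i hi => congrFun hmn ⟨i, hi⟩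
      exact sub_sub_sub_cancel_right _ _ (f N) ▸ sub_mem (hspan m) (hspan n)
    have hmono : StrictMono fun n => G.ht (f n) := strictMono_nat_of_lt_succ fun n => (hf n).ht_lt
    exact Nat.add_left_cancel (hmono.injective (congrArg G.ht heq))
  have hfin := Set.Finite.pi' fun _ : ↥(D N)ᶜ => G.form_root_small_finite
  exact hfin.not_infinite (Set.infinite_of_injective_forall_mem hinj
    fun n i => ⟨(mem_D_compl n).1 i.2, f (N + n), (hf _).1, i, rfl⟩)

variable (G) in
theorem reflTransGen_shortStep_finite (β : V) :
    {β' | Relation.ReflTransGen G.ShortStep β β'}.Finite := by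
  have hwf : WellFounded fun β' β => G.ShortStep β β' :=
    wellFounded_iff_isEmpty_descending_chain.2 ⟨fun f => not_forall_shortStep f.1 f.2⟩
  induction β using hwf.induction with
  | _ β ih =>
  have hsucc : {γ | G.ShortStep β γ}.Finite := by
    refine (Set.finite_range fun i => G.ρ (cs.simple i) β).subset ?_
    rintro _ ⟨-, -, i, -, rfl⟩
    exact ⟨i, rfl⟩
  refine ((hsucc.biUnion ih).insert β).subset fun β' hβ' => ?_
  rcases Relation.ReflTransGen.cases_head_iff.1 hβ' with rfl | ⟨γ, hγ, hγβ'⟩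
  · exact .inl rfl
  · exact .inr (Set.mem_biUnion hγ hγβ')

end FiniteRank

end ShortSteps

end GeomRep

/-- The set of small roots of a finite-rank Coxeter system is finite. -/
theorem smallRoots_finite {B : Type*} {W : Type*} [Group W] {M : CoxeterMatrix B}
    (cs : CoxeterSystem M W) {V : Type*} [AddCommGroup V] [Module ℝ V]
    (G : GeomRep M cs V) [Finite B] :
    {β : V | G.IsSmall β}.Finite := by
  have hreach := Set.finite_iUnion fun i => G.reflTransGen_shortStep_finite (G.root i)
  exact hreach.subset fun β hβ => Set.mem_iUnion.2 hβ.exists_reflTransGen_shortStep
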